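/- Let X = ({0} × [0,1]) ∪ ([0,1] × {0}) ⊆ ℝ², equipped with the Euclidean metric, and let Y = {(0,1), (1,0)}. If F : Y → ℝ is not constant, then F admits no absolutely minimal (AM) extension u : X → ℝ. -/

import Mathlib

open Metric Set

noncomputable section

/-- The (possibly infinite) Lipschitz constant of `u` on `S`. -/
def lipOn {X : Type*} [MetricSpace X] (u : X → ℝ) (S : Set X) : ENNReal :=
  ⨆ (x : X) (_ : x ∈ S) (y : X) (_ : y ∈ S) (_ : x ≠ y),
    ENNReal.ofReal (|u x - u y| / dist x y)

/-- `u : X → ℝ` is an absolutely minimal (AM) extension of `F` prescribed on `Y`. -/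
def IsAMExtension {X : Type*} [MetricSpace X] (Y : Set X) (F u : X → ℝ) : Prop :=
  lipOn u Set.univ < ⊤ ∧ Set.EqOn u F Y ∧
    ∀ U : Set X, IsOpen U → U ⊆ Yᶜ → lipOn u U = lipOn u (frontier U)

/-- The point `(x, y)` of the Euclidean plane. -/
def pt (x y : ℝ) : EuclideanSpace ℝ (Fin 2) :=
  (WithLp.equiv 2 (Fin 2 → ℝ)).symm ![x, y]

/-- The L-shaped set `({0} × [0,1]) ∪ ([0,1] × {0}) ⊆ ℝ²` (Euclidean metric). -/
def LSet : Set (EuclideanSpace ℝ (Fin 2)) :=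
  {p | (p 0 = 0 ∧ p 1 ∈ Icc (0 : ℝ) 1) ∨ (p 0 ∈ Icc (0 : ℝ) 1 ∧ p 1 = 0)}


theorem lip_le {X : Type*} [MetricSpace X] {u : X → ℝ} {U : Set X} {C : ℝ} (hC : 0 ≤ C)
    (h : lipOn u U ≤ ENNReal.ofReal C) {p q : X} (hp : p ∈ U) (hq : q ∈ U) :
    |u p - u q| ≤ C * dist p q := by
  by_cases hpq : p = q
  · subst hpq; simp
  have h1 : ENNReal.ofReal (|u p - u q| / dist p q) ≤ lipOn u U := by
    unfold lipOn
    exact le_iSup_of_le p (le_iSup_of_le hp (le_iSup_of_le q (le_iSup_of_le hq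
      (le_iSup_of_le hpq le_rfl))))
  have h2 := (ENNReal.ofReal_le_ofReal_iff hC).1 (h1.trans h)
  rwa [div_le_iff₀ (dist_pos.2 hpq)] at h2

theorem key {X : Type*} [MetricSpace X] {Y : Set X} {F u : X → ℝ} (hu : IsAMExtension Y F u)
    {U : Set X} (hU : IsOpen U) (hUY : U ⊆ Yᶜ) {x y : X} (hxy : x ≠ y)
    (hf : ∀ z ∈ closure U, z ∉ U → z = x ∨ z = y) {p q : X} (hp : p ∈ U) (hq : q ∈ U) :
    |u p - u q| * dist x y ≤ |u x - u y| * dist p q := by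
  have hd := dist_pos.2 hxy
  have h1 : lipOn u U ≤ ENNReal.ofReal (|u x - u y| / dist x y) := by
    rw [hu.2.2 U hU hUY]
    unfold lipOn
    refine iSup_le fun a => iSup_le fun ha => iSup_le fun b => iSup_le fun hb =>
      iSup_le fun hab => ?_
    rw [hU.frontier_eq] at ha hb
    rcases hf a ha.1 ha.2 with rfl | rfl <;> rcases hf b hb.1 hb.2 with rfl | rfl
    · exact absurd rfl hab
    · exact le_rfl
    · rw [abs_sub_comm, dist_comm]
    · exact absurd rfl hab
  have h2 := lip_le (by positivity) h1 hp hq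
  calc |u p - u q| * dist x y ≤ (|u x - u y| / dist x y * dist p q) * dist x y := by gcongr
    _ = _ := by field_simp

def clip (t : ℝ) : ℝ := max 0 (min 1 t)

theorem clip_mem (t : ℝ) : clip t ∈ Icc (0 : ℝ) 1 := by
  unfold clip; constructor <;> simp

theorem clip_eq {t : ℝ} (h0 : 0 ≤ t) (h1 : t ≤ 1) : clip t = t := by
  unfold clip; simp [h0, h1]

def ptP (t : ℝ) : ↥LSet := ⟨pt 0 (clip t), Or.inl ⟨by simp [pt], by simpa [pt] using clip_mem t⟩⟩
def ptQ (t : ℝ) : ↥LSet := ⟨pt (clip t) 0, Or.inr ⟨by simpa [pt] using clip_mem t, by simp [pt]⟩⟩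

theorem P0 (t : ℝ) : (ptP t).1 0 = 0 := by simp [ptP, pt]
theorem P1 {t : ℝ} (h0 : 0 ≤ t) (h1 : t ≤ 1) : (ptP t).1 1 = t := by
  simp [ptP, pt, clip_eq h0 h1]
theorem Q1 (t : ℝ) : (ptQ t).1 1 = 0 := by simp [ptQ, pt]
theorem Q0 {t : ℝ} (h0 : 0 ≤ t) (h1 : t ≤ 1) : (ptQ t).1 0 = t := by
  simp [ptQ, pt, clip_eq h0 h1]

theorem L_ext {p q : ↥LSet} (h0 : p.1 0 = q.1 0) (h1 : p.1 1 = q.1 1) : p = q := by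
  apply Subtype.ext
  ext i
  fin_cases i
  · exact h0
  · exact h1

theorem L_dist (p q : ↥LSet) :
    dist p q = √((p.1 0 - q.1 0) ^ 2 + (p.1 1 - q.1 1) ^ 2) := by
  rw [Subtype.dist_eq, EuclideanSpace.dist_eq]
  simp [Fin.sum_univ_two, Real.dist_eq, sq_abs]

theorem dPP {s t : ℝ} (hs : 0 ≤ s) (hs1 : s ≤ 1) (ht : 0 ≤ t) (ht1 : t ≤ 1) :
    dist (ptP s) (ptP t) = |s - t| := by
  rw [L_dist, P0, P0, P1 hs hs1, P1 ht ht1]; simp [Real.sqrt_sq_eq_abs]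
theorem dQQ {s t : ℝ} (hs : 0 ≤ s) (hs1 : s ≤ 1) (ht : 0 ≤ t) (ht1 : t ≤ 1) :
    dist (ptQ s) (ptQ t) = |s - t| := by
  rw [L_dist, Q1, Q1, Q0 hs hs1, Q0 ht ht1]; simp [Real.sqrt_sq_eq_abs]
theorem dPQ {s t : ℝ} (hs : 0 ≤ s) (hs1 : s ≤ 1) (ht : 0 ≤ t) (ht1 : t ≤ 1) :
    dist (ptP s) (ptQ t) = √(s ^ 2 + t ^ 2) := by
  rw [L_dist, P0, Q1, Q0 ht ht1, P1 hs hs1]; congr 1; ring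

theorem cont_coord (i : Fin 2) : Continuous fun p : ↥LSet => p.1 i := by
  fun_prop

theorem Y_coord {p : ↥LSet} (h : (p : EuclideanSpace ℝ (Fin 2)) = pt 0 1 ∨
      (p : EuclideanSpace ℝ (Fin 2)) = pt 1 0) : p = ptP 1 ∨ p = ptQ 1 := by
  rcases h with h | h
  · left; apply Subtype.ext; rw [h]; simp [ptP, clip]
  · right; apply Subtype.ext; rw [h]; simp [ptQ, clip]

theorem affine_aux {f : ℝ → ℝ} {K : ℝ} (hK : 0 ≤ K)
    (hL : ∀ s t, 0 ≤ s → s ≤ 1 → 0 ≤ t → t ≤ 1 → |f s - f t| ≤ K * |s - t|)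
    (hm : ∀ s t, 0 < s → s < 1 → 0 < t → t < 1 → |f s - f t| ≤ |f 1 - f 0| * |s - t|)
    {t : ℝ} (h0 : 0 < t) (h1 : t < 1) : f t = f 0 + (f 1 - f 0) * t := by
  set C := |f 1 - f 0| with hC
  have hC0 : 0 ≤ C := abs_nonneg _
  have a0 : |f t - f 0| ≤ C * t := by
    refine le_of_forall_pos_le_add fun e he => ?_
    set r := min (t / 2) (e / (K + 1)) with hr
    have hr0 : 0 < r := by positivity
    have hr1 : r ≤ t / 2 := min_le_left _ _
    have hr2 : r * (K + 1) ≤ e := by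
      rw [← le_div_iff₀ (by positivity)]; exact min_le_right _ _
    have e1 := hm t r h0 h1 hr0 (by linarith)
    have e2 := hL r 0 hr0.le (by linarith) le_rfl zero_le_one
    rw [abs_of_pos (by linarith : 0 < t - r)] at e1
    rw [sub_zero, abs_of_pos hr0] at e2
    have e3 := abs_sub_le (f t) (f r) (f 0)
    nlinarith
  have a1 : |f 1 - f t| ≤ C * (1 - t) := by
    refine le_of_forall_pos_le_add fun e he => ?_
    set r := min ((1 - t) / 2) (e / (K + 1)) with hr
    have ht1 : 0 < 1 - t := by linarith
    have hr0 : 0 < r := by positivity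
    have hr1 : r ≤ (1 - t) / 2 := min_le_left _ _
    have hr2 : r * (K + 1) ≤ e := by
      rw [← le_div_iff₀ (by positivity)]; exact min_le_right _ _
    have e1 := hm (1 - r) t (by linarith) (by linarith) h0 h1
    have e2 := hL 1 (1 - r) zero_le_one le_rfl (by linarith) (by linarith)
    rw [abs_of_pos (by linarith : 0 < 1 - r - t)] at e1
    rw [sub_sub_cancel, abs_of_pos hr0] at e2
    have e3 := abs_sub_le (f 1) (f (1 - r)) (f t)
    nlinarith
  rw [abs_le] at a0 a1
  rcases abs_cases (f 1 - f 0) with ⟨h, _⟩ | ⟨h, _⟩ <;> rw [← hC] at h <;> rw [h] at a0 a1 <;>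
    linarith [a0.1, a0.2, a1.1, a1.2]

theorem sq_aux {x y a b : ℝ} (ha : 0 ≤ a) (hb : 0 ≤ b) (h : |x| * √a ≤ |y| * √b) :
    x ^ 2 * a ≤ y ^ 2 * b := by
  have := mul_self_le_mul_self (by positivity) h
  have e1 := Real.mul_self_sqrt ha
  have e2 := Real.mul_self_sqrt hb
  have e3 := abs_mul_abs_self x
  have e4 := abs_mul_abs_self y
  calc x ^ 2 * a = (|x| * |x|) * (√a * √a) := by rw [e1, e3]; ring
    _ ≤ (|y| * |y|) * (√b * √b) := by linarith
    _ = _ := by rw [e2, e4]; ring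

/-- On the L-shaped space `X = ({0} × [0,1]) ∪ ([0,1] × {0})` with the Euclidean metric
and `Y = {(0,1), (1,0)}`, no nonconstant `F : Y → ℝ` admits an AM extension. -/
theorem stmt16 (F : ↥LSet → ℝ) (Y : Set ↥LSet)
    (hY : Y = {p : ↥LSet | (p : EuclideanSpace ℝ (Fin 2)) = pt 0 1 ∨
      (p : EuclideanSpace ℝ (Fin 2)) = pt 1 0})
    (hF : ∃ p ∈ Y, ∃ q ∈ Y, F p ≠ F q) :
    ¬ ∃ u : ↥LSet → ℝ, IsAMExtension Y F u := by
  rintro ⟨u, hu⟩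
  have hYc : ∀ p : ↥LSet, p.1 0 < 1 → p.1 1 < 1 → p ∈ Yᶜ := by
    intro p h0 h1 hp
    rw [hY] at hp
    rcases Y_coord hp with rfl | rfl
    · rw [P1 zero_le_one le_rfl] at h1; exact lt_irrefl _ h1
    · rw [Q0 zero_le_one le_rfl] at h0; exact lt_irrefl _ h0
  have hne : u (ptP 1) ≠ u (ptQ 1) := by
    obtain ⟨p, hp, q, hq, hpq⟩ := hF
    rw [← hu.2.1 hp, ← hu.2.1 hq] at hpq
    rw [hY] at hp hq
    rcases Y_coord hp with rfl | rfl <;> rcases Y_coord hq with rfl | rfl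
    · exact absurd rfl hpq
    · exact hpq
    · exact hpq.symm
    · exact absurd rfl hpq
  have hPQ0 : ptP 0 = ptQ 0 := by
    apply L_ext
    · rw [P0, Q0 le_rfl zero_le_one]
    · rw [Q1, P1 le_rfl zero_le_one]
  set K := (lipOn u Set.univ).toReal
  have hK : 0 ≤ K := ENNReal.toReal_nonneg
  have hL : ∀ p q, |u p - u q| ≤ K * dist p q := fun p q =>
    lip_le hK (ENNReal.ofReal_toReal hu.1.ne).ge (mem_univ p) (mem_univ q)
  have hf : ∀ t, 0 < t → t < 1 →
      u (ptP t) = u (ptP 0) + (u (ptP 1) - u (ptP 0)) * t := by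
    intro t h0 h1
    refine affine_aux (f := fun t => u (ptP t)) hK ?_ ?_ h0 h1
    · intro s t hs hs1 ht ht1
      rw [← dPP hs hs1 ht ht1]; exact hL _ _
    · intro s t hs hs1 ht ht1
      have hd : dist (ptP 1) (ptP 0) = 1 := by rw [dPP] <;> norm_num
      have := key hu (U := {p | 0 < p.1 1 ∧ p.1 1 < 1})
        ((isOpen_lt continuous_const (cont_coord 1)).inter
          (isOpen_lt (cont_coord 1) continuous_const))
        (by
          intro p hp
          refine hYc p ?_ hp.2
          rcases p.2 with h | h
          · rw [h.1]; exact zero_lt_one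
          · exact absurd h.2 hp.1.ne')
        (x := ptP 1) (y := ptP 0) (dist_pos.1 (by rw [hd]; exact zero_lt_one))
        (by
          intro z hz hzU
          have hc : IsClosed {p : ↥LSet | p.1 0 = 0} := isClosed_eq (cont_coord 0) continuous_const
          have hz0 : z.1 0 = 0 := closure_minimal (by
            intro p hp
            rcases p.2 with h | h
            · exact h.1
            · exact absurd h.2 hp.1.ne') hc hz
          have hz1 : z.1 1 ∈ Icc (0 : ℝ) 1 := by
            rcases z.2 with h | h
            · exact h.2
            · rw [h.2]; simp
          rcases eq_or_lt_of_le hz1.1 with h | h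
          · right; apply L_ext
            · rw [hz0, P0]
            · rw [← h, P1 le_rfl zero_le_one]
          rcases eq_or_lt_of_le hz1.2 with h' | h'
          · left; apply L_ext
            · rw [hz0, P0]
            · rw [h', P1 zero_le_one le_rfl]
          · exact absurd ⟨h, h'⟩ hzU)
        (p := ptP s) (q := ptP t)
        (by simp only [mem_ofPred_eq, P1 hs.le hs1.le]; exact ⟨hs, hs1⟩)
        (by simp only [mem_ofPred_eq, P1 ht.le ht1.le]; exact ⟨ht, ht1⟩)
      rwa [hd, mul_one, dPP hs.le hs1.le ht.le ht1.le] at this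
  have hg : ∀ t, 0 < t → t < 1 →
      u (ptQ t) = u (ptQ 0) + (u (ptQ 1) - u (ptQ 0)) * t := by
    intro t h0 h1
    refine affine_aux (f := fun t => u (ptQ t)) hK ?_ ?_ h0 h1
    · intro s t hs hs1 ht ht1
      rw [← dQQ hs hs1 ht ht1]; exact hL _ _
    · intro s t hs hs1 ht ht1
      have hd : dist (ptQ 1) (ptQ 0) = 1 := by rw [dQQ] <;> norm_num
      have := key hu (U := {p | 0 < p.1 0 ∧ p.1 0 < 1})
        ((isOpen_lt continuous_const (cont_coord 0)).inter
          (isOpen_lt (cont_coord 0) continuous_const))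
        (by
          intro p hp
          refine hYc p hp.2 ?_
          rcases p.2 with h | h
          · exact absurd h.1 hp.1.ne'
          · rw [h.2]; exact zero_lt_one)
        (x := ptQ 1) (y := ptQ 0) (dist_pos.1 (by rw [hd]; exact zero_lt_one))
        (by
          intro z hz hzU
          have hc : IsClosed {p : ↥LSet | p.1 1 = 0} := isClosed_eq (cont_coord 1) continuous_const
          have hz0 : z.1 1 = 0 := closure_minimal (by
            intro p hp
            rcases p.2 with h | h
            · exact absurd h.1 hp.1.ne'
            · exact h.2) hc hz
          have hz1 : z.1 0 ∈ Icc (0 : ℝ) 1 := by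
            rcases z.2 with h | h
            · rw [h.1]; simp
            · exact h.1
          rcases eq_or_lt_of_le hz1.1 with h | h
          · right; apply L_ext
            · rw [← h, Q0 le_rfl zero_le_one]
            · rw [hz0, Q1]
          rcases eq_or_lt_of_le hz1.2 with h' | h'
          · left; apply L_ext
            · rw [h', Q0 zero_le_one le_rfl]
            · rw [hz0, Q1]
          · exact absurd ⟨h, h'⟩ hzU)
        (p := ptQ s) (q := ptQ t)
        (by simp only [mem_ofPred_eq, Q0 hs.le hs1.le]; exact ⟨hs, hs1⟩)
        (by simp only [mem_ofPred_eq, Q0 ht.le ht1.le]; exact ⟨ht, ht1⟩)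
      rwa [hd, mul_one, dQQ hs.le hs1.le ht.le ht1.le] at this
  have hc : ∀ s t s' t' : ℝ, 0 < s' → s' < s → s < 1 → 0 < t' → t' < t → t < 1 →
      |u (ptP s') - u (ptQ t')| * √(s ^ 2 + t ^ 2) ≤
        |u (ptP s) - u (ptQ t)| * √(s' ^ 2 + t' ^ 2) := by
    intro s t s' t' hs' hs hs1 ht' ht ht1
    have hd := dPQ (s := s) (t := t) (by linarith) (by linarith) (by linarith) (by linarith)
    have hd' := dPQ (s := s') (t := t') (by linarith) (by linarith) (by linarith) (by linarith)
    rw [← hd, ← hd']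
    refine key hu (U := {p | p.1 1 < s ∧ p.1 0 < t})
        ((isOpen_lt (cont_coord 1) continuous_const).inter
          (isOpen_lt (cont_coord 0) continuous_const))
        (fun p hp => hYc p (hp.2.trans ht1) (hp.1.trans hs1)) (dist_pos.1 ?_) ?_ ?_ ?_
    · rw [hd]; apply Real.sqrt_pos.2; nlinarith
    · intro z hz hzU
      have hcl : IsClosed {p : ↥LSet | p.1 1 ≤ s ∧ p.1 0 ≤ t} :=
        (isClosed_le (cont_coord 1) continuous_const).inter
          (isClosed_le (cont_coord 0) continuous_const)
      have hz' : z.1 1 ≤ s ∧ z.1 0 ≤ t :=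
        closure_minimal (t := {p : ↥LSet | p.1 1 ≤ s ∧ p.1 0 ≤ t})
          (fun p hp => ⟨le_of_lt hp.1, le_of_lt hp.2⟩) hcl hz
      rcases z.2 with h | h
      · left; apply L_ext
        · rw [P0, h.1]
        · rw [P1 (by linarith) (by linarith)]
          by_contra hn
          exact hzU ⟨lt_of_le_of_ne hz'.1 hn, by rw [h.1]; linarith⟩
      · right; apply L_ext
        · rw [Q0 (by linarith) (by linarith)]
          by_contra hn
          exact hzU ⟨by rw [h.2]; linarith, lt_of_le_of_ne hz'.2 hn⟩
        · rw [Q1, h.2]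
    · refine ⟨?_, ?_⟩
      · rw [P1 (by linarith) (by linarith)]; exact hs
      · rw [P0]; linarith
    · refine ⟨?_, ?_⟩
      · rw [Q1]; linarith
      · rw [Q0 (by linarith) (by linarith)]; exact ht
  have hc' : ∀ s t s' t' : ℝ, 0 < s' → s' < s → s < 1 → 0 < t' → t' < t → t < 1 →
      ((u (ptP 1) - u (ptP 0)) * s' - (u (ptQ 1) - u (ptP 0)) * t') ^ 2 * (s ^ 2 + t ^ 2) ≤
      ((u (ptP 1) - u (ptP 0)) * s - (u (ptQ 1) - u (ptP 0)) * t) ^ 2 * (s' ^ 2 + t' ^ 2) := by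
    intro s t s' t' hs' hs hs1 ht' ht ht1
    have h := sq_aux (by positivity) (by positivity) (hc s t s' t' hs' hs hs1 ht' ht ht1)
    rw [hf s (by linarith) hs1, hg t (by linarith) ht1, hf s' hs' (by linarith),
      hg t' ht' (by linarith), ← hPQ0] at h
    convert h using 2 <;> ring
  have hAB : u (ptP 1) - u (ptP 0) ≠ u (ptQ 1) - u (ptP 0) := fun h => hne (by linarith)
  generalize u (ptP 1) - u (ptP 0) = A at hc' hAB
  generalize u (ptQ 1) - u (ptP 0) = B at hc' hAB
  have h1 := hc' (1/2) (1/4) (1/8) (1/8) (by norm_num) (by norm_num) (by norm_num) (by norm_num)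
    (by norm_num) (by norm_num)
  have h2 := hc' (1/2) (1/4) (1/16) (1/8) (by norm_num) (by norm_num) (by norm_num) (by norm_num)
    (by norm_num) (by norm_num)
  have h3 := hc' (1/4) (1/2) (1/8) (1/16) (by norm_num) (by norm_num) (by norm_num) (by norm_num)
    (by norm_num) (by norm_num)
  have h4 : (A - B) * (A + B) = 0 := by nlinarith
  have h5 : A + B = 0 := (mul_eq_zero.1 h4).resolve_left (sub_ne_zero.2 hAB)
  have h6 : B = -A := by linarith
  subst h6
  have h7 : A ^ 2 ≤ 0 := by nlinarith
  have h8 : A = 0 := by nlinarith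
  apply hAB; rw [h8]; simp

end
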